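/- Let a ∈ L¹(ℝ₊)^{p×p}, b ∈ L¹(ℝ₊)^{p×q}, c ∈ L¹(ℝ₋)^{q×p}, d ∈ L¹(ℝ₋)^{q×q}, and set α = e_p + a, β = b, γ = c, δ = e_q + d. Assume a* + a + a*⋆a − c*⋆c = 0, d* + d + d*⋆d − b*⋆b = 0 and b + a*⋆b = c* + c*⋆d. Then the following eight operator identities hold: T₊,α* H₊,β = H₊,γ* T₋,δ, T₊,α* H₊,α = H₊,γ* T₋,γ, T₊,β* H₊,β = H₊,δ* T₋,δ, T₊,β* H₊,α = H₊,δ* T₋,γ, and T₋,δ* H₋,γ = H₋,β* T₊,α, T₋,δ* H₋,δ = H₋,β* T₊,β, T₋,γ* H₋,γ = H₋,α* T₊,α, T₋,γ* H₋,δ = H₋,α* T₊,β. -/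

import Mathlib

/-!
Extend functions on a half-line by zero, so that all operators become convolutions on `ℝ` followed
by restriction. Let `A` be the half-line carrying the outputs and `B` the complementary one. In a
product `T H`, the Wiener–Hopf factor `T` has symbol supported in `B`, so the part of the inner
convolution that the Hankel operator `H` cuts off, which lives on `B`, would not contribute on `A`
anyway. In a product `H T`, the symbol of `T` and the input both live on `B`, so `T` cuts off
nothing. Hence, by associativity of convolution (`cv_cv`), both sides of each identity are
convolutions of the input with a single product kernel, restricted to `A`; they agree as soon as
the two product kernels agree almost everywhere off `B` (`cv_eq_off`). This is `intertwine`.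

The product kernels are compared by means of the three relations in `CondL1` and the adjoint of the
last one (`CondL1.adj`). The remaining terms, among `a, b, c, d` and their adjoints, are supported
in `B`.
-/

open MeasureTheory Set Matrix
open scoped ComplexConjugate

noncomputable section

abbrev MatF (r s : ℕ) := ℝ → Matrix (Fin r) (Fin s) ℂ

def conv {r s u : ℕ} (f : MatF r s) (h : MatF s u) : MatF r u :=
  fun t => Matrix.of fun i j => ∫ τ : ℝ, (f (t - τ) * h τ) i j

def adjF {r s : ℕ} (f : MatF r s) : MatF s r := fun t => (f (-t))ᴴ

def L1Plus {r s : ℕ} (f : MatF r s) : Prop :=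
  (∀ i j, Integrable fun t => f t i j) ∧ ∀ t < (0:ℝ), f t = 0

def L1Minus {r s : ℕ} (f : MatF r s) : Prop :=
  (∀ i j, Integrable fun t => f t i j) ∧ ∀ t > (0:ℝ), f t = 0

def μP : Measure ℝ := volume.restrict (Ici 0)
def μM : Measure ℝ := volume.restrict (Iic 0)

abbrev L1P (n : ℕ) := Lp (Fin n → ℂ) 1 μP
abbrev L1M (n : ℕ) := Lp (Fin n → ℂ) 1 μM

def IsHP {k m : ℕ} (r : MatF k m) (H : L1M m →L[ℂ] L1P k) : Prop :=
  ∀ f : L1M m, ⇑(H f) =ᵐ[μP] fun t => ∫ s, (r (t - s)).mulVec (f s) ∂μM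

def IsHM {k m : ℕ} (r : MatF k m) (H : L1P m →L[ℂ] L1M k) : Prop :=
  ∀ f : L1P m, ⇑(H f) =ᵐ[μM] fun t => ∫ s, (r (t - s)).mulVec (f s) ∂μP

def IsTP {k m : ℕ} (r₀ : Matrix (Fin k) (Fin m) ℂ) (r : MatF k m)
    (T : L1P m →L[ℂ] L1P k) : Prop :=
  ∀ f : L1P m, ⇑(T f) =ᵐ[μP] fun t => r₀.mulVec (f t) + ∫ s, (r (t - s)).mulVec (f s) ∂μP

def IsTM {k m : ℕ} (r₀ : Matrix (Fin k) (Fin m) ℂ) (r : MatF k m)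
    (T : L1M m →L[ℂ] L1M k) : Prop :=
  ∀ f : L1M m, ⇑(T f) =ᵐ[μM] fun t => r₀.mulVec (f t) + ∫ s, (r (t - s)).mulVec (f s) ∂μM

def blockCLM {X Y Z W : Type*} [NormedAddCommGroup X] [NormedSpace ℂ X]
    [NormedAddCommGroup Y] [NormedSpace ℂ Y] [NormedAddCommGroup Z] [NormedSpace ℂ Z]
    [NormedAddCommGroup W] [NormedSpace ℂ W]
    (A : X →L[ℂ] Z) (B : Y →L[ℂ] Z) (C : X →L[ℂ] W) (D : Y →L[ℂ] W) :
    (X × Y) →L[ℂ] (Z × W) :=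
  (A.comp (ContinuousLinearMap.fst ℂ X Y) + B.comp (ContinuousLinearMap.snd ℂ X Y)).prod
    (C.comp (ContinuousLinearMap.fst ℂ X Y) + D.comp (ContinuousLinearMap.snd ℂ X Y))

def InvertibleCLM {X Y : Type*} [NormedAddCommGroup X] [NormedSpace ℂ X]
    [NormedAddCommGroup Y] [NormedSpace ℂ Y] (T : X →L[ℂ] Y) : Prop :=
  ∃ S : Y →L[ℂ] X, S.comp T = ContinuousLinearMap.id ℂ X ∧ T.comp S = ContinuousLinearMap.id ℂ Y

def AeZeroPos {r s : ℕ} (f : MatF r s) : Prop := ∀ᵐ t : ℝ, 0 < t → f t = 0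
def AeZeroNeg {r s : ℕ} (f : MatF r s) : Prop := ∀ᵐ t : ℝ, t < 0 → f t = 0

def EGSol {p q : ℕ} (a : MatF p p) (b : MatF p q) (c : MatF q p) (d : MatF q q)
    (g : MatF p q) : Prop :=
  AeZeroPos (fun t => a t + conv g c t) ∧
  AeZeroNeg (fun t => adjF g t + conv (adjF g) a t + c t) ∧
  AeZeroNeg (fun t => d t + conv (adjF g) b t) ∧
  AeZeroPos (fun t => g t + conv g d t + b t)


def colF {r s : ℕ} (f : MatF r s) (j : Fin s) : ℝ → Fin r → ℂ := fun t i => f t i j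

/-- Condition (L1): `α*⋄α − γ*⋄γ = e_p`, `δ*⋄δ − β*⋄β = e_q`, `α*⋄β = γ*⋄δ`,
written out in terms of the data `a,b,c,d`. -/
def CondL1 {p q : ℕ} (a : MatF p p) (b : MatF p q) (c : MatF q p) (d : MatF q q) : Prop :=
  (∀ᵐ t ∂(volume : Measure ℝ), adjF a t + a t + conv (adjF a) a t - conv (adjF c) c t = 0) ∧
  (∀ᵐ t ∂(volume : Measure ℝ), adjF d t + d t + conv (adjF d) d t - conv (adjF b) b t = 0) ∧
  (∀ᵐ t ∂(volume : Measure ℝ), b t + conv (adjF a) b t = adjF c t + conv (adjF c) d t)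

/-- The transposed identities (conditions (C4)--(C6) in the `L¹` setting). -/
def CondL1T {p q : ℕ} (a : MatF p p) (b : MatF p q) (c : MatF q p) (d : MatF q q) : Prop :=
  (∀ᵐ t ∂(volume : Measure ℝ), a t + adjF a t + conv a (adjF a) t - conv b (adjF b) t = 0) ∧
  (∀ᵐ t ∂(volume : Measure ℝ), d t + adjF d t + conv d (adjF d) t - conv c (adjF c) t = 0) ∧
  (∀ᵐ t ∂(volume : Measure ℝ), adjF c t + conv a (adjF c) t = b t + conv b (adjF d) t)

/-! ### Convolution of matrix kernels with vector functions -/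

section Convolution

open scoped Convolution

/-- The product of rectangular matrices as a continuous bilinear map. Matrices are regarded here
as functions of two indices, since these carry a canonical norm. -/
def mulL (k l m : ℕ) : (Fin k → Fin l → ℂ) →L[ℂ] (Fin l → Fin m → ℂ) →L[ℂ]
    (Fin k → Fin m → ℂ) :=
  (LinearMap.mk₂ ℂ (fun (A : Fin k → Fin l → ℂ) (B : Fin l → Fin m → ℂ) i j => ∑ x, A i x * B x j)
    (fun _ _ _ => by ext; simp [add_mul, Finset.sum_add_distrib])
    (fun _ _ _ => by ext; simp [Finset.mul_sum, mul_assoc])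
    (fun _ _ _ => by ext; simp [mul_add, Finset.sum_add_distrib])
    (fun _ _ _ => by ext; simp [Finset.mul_sum, mul_left_comm])).toContinuousBilinearMap

/-- The action of matrices, regarded as functions of two indices, on vectors as a continuous
bilinear map. -/
def mulVecL (k m : ℕ) : (Fin k → Fin m → ℂ) →L[ℂ] (Fin m → ℂ) →L[ℂ] (Fin k → ℂ) :=
  (LinearMap.mk₂ ℂ (fun (A : Fin k → Fin m → ℂ) (v : Fin m → ℂ) i => ∑ x, A i x * v x)
    (fun _ _ _ => by ext; simp [add_mul, Finset.sum_add_distrib])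
    (fun _ _ _ => by ext; simp [Finset.mul_sum, mul_assoc])
    (fun _ _ _ => by ext; simp [mul_add, Finset.sum_add_distrib])
    (fun _ _ _ => by ext; simp [Finset.mul_sum, mul_left_comm])).toContinuousBilinearMap

/-- A matrix function regarded as a function into the normed space of functions of two indices. -/
def toPi {k m : ℕ} (r : MatF k m) : ℝ → Fin k → Fin m → ℂ := r

/-- Convolution on the whole line of a matrix kernel with a vector function. -/
def cv {k m : ℕ} (r : MatF k m) (F : ℝ → Fin m → ℂ) : ℝ → Fin k → ℂ :=
  toPi r ⋆[mulVecL k m] F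

lemma cv_apply {k m : ℕ} (r : MatF k m) (F : ℝ → Fin m → ℂ) (t : ℝ) :
    cv r F t = ∫ s, r (t - s) *ᵥ F s :=
  convolution_eq_swap (f := toPi r) (mulVecL k m)

/-- Integrability of a matrix function, entry by entry. -/
def IntM {k m : ℕ} (r : MatF k m) : Prop := ∀ i j, Integrable fun t => r t i j

lemma IntM.pi {k m : ℕ} {r : MatF k m} (h : IntM r) :
    Integrable (toPi r) :=
  Integrable.of_eval fun i => Integrable.of_eval fun j => h i j

lemma IntM.of_pi {k m : ℕ} {r : MatF k m}
    (h : Integrable (toPi r)) : IntM r :=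
  fun i j => (h.eval i).eval j

lemma integrable_cv {k m : ℕ} {r : MatF k m} {F : ℝ → Fin m → ℂ} (hr : IntM r)
    (hF : Integrable F) : Integrable (cv r F) :=
  hr.pi.integrable_convolution _ hF

lemma cv_exists {k m : ℕ} {r : MatF k m} {F : ℝ → Fin m → ℂ} (hr : IntM r)
    (hF : Integrable F) : ∀ᵐ t, Integrable fun s => r (t - s) *ᵥ F s := by
  filter_upwards [hr.pi.ae_convolution_exists (mulVecL k m) hF] with t ht
  exact ht.integrable_swap

lemma cv_congr {k m : ℕ} (r : MatF k m) {F G : ℝ → Fin m → ℂ} (h : F =ᵐ[volume] G) :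
    cv r F = cv r G := by
  ext1 t
  rw [cv_apply, cv_apply]
  refine integral_congr_ae ?_
  filter_upwards [h] with s hs
  rw [hs]

lemma cv_add_right {k m : ℕ} {r : MatF k m} {F G : ℝ → Fin m → ℂ} (hr : IntM r)
    (hF : Integrable F) (hG : Integrable G) :
    ∀ᵐ t, cv r (F + G) t = cv r F t + cv r G t := by
  filter_upwards [cv_exists hr hF, cv_exists hr hG] with t h1 h2
  rw [cv_apply, cv_apply, cv_apply, ← integral_add h1 h2]
  simp only [Pi.add_apply, Matrix.mulVec_add]

lemma cv_add_left {k m : ℕ} {r r' : MatF k m} {F : ℝ → Fin m → ℂ} (hr : IntM r)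
    (hr' : IntM r') (hF : Integrable F) :
    ∀ᵐ t, cv (fun t => r t + r' t) F t = cv r F t + cv r' F t := by
  filter_upwards [cv_exists hr hF, cv_exists hr' hF] with t h1 h2
  rw [cv_apply, cv_apply, cv_apply, ← integral_add h1 h2]
  simp only [Matrix.add_mulVec]

lemma mulVec_cv {k l m : ℕ} (A : Matrix (Fin k) (Fin l) ℂ) {r : MatF l m} {F : ℝ → Fin m → ℂ}
    (hr : IntM r) (hF : Integrable F) :
    ∀ᵐ t, A *ᵥ cv r F t = cv (fun t => A * r t) F t := by
  filter_upwards [cv_exists hr hF] with t h1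
  rw [cv_apply, cv_apply]
  simp only [← Matrix.mulVec_mulVec]
  exact ((mulVecL k l A).integral_comp_comm h1).symm

lemma cv_mulVec {k l m : ℕ} (r : MatF k l) (A : Matrix (Fin l) (Fin m) ℂ) (F : ℝ → Fin m → ℂ) :
    cv r (fun t => A *ᵥ F t) = cv (fun t => r t * A) F := by
  ext1 t
  rw [cv_apply, cv_apply]
  simp only [Matrix.mulVec_mulVec]

/-- The entrywise integral defining `conv` agrees with the matrix-valued Bochner integral
wherever the latter converges, hence almost everywhere. -/
lemma conv_ae_eq {k l m : ℕ} {f : MatF k l} {g : MatF l m} (hf : IntM f)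
    (hg : IntM g) : toPi (conv f g) =ᵐ[volume] toPi f ⋆[mulL k l m] toPi g := by
  filter_upwards [hf.pi.ae_convolution_exists (mulL k l m) hg.pi] with t ht
  have ht' : Integrable (toPi fun s => f (t - s) * g s) := ht.integrable_swap
  have h1 : ∀ i, Integrable fun s => (f (t - s) * g s) i := Integrable.eval ht'
  have h2 : ∀ i j, Integrable fun s => (f (t - s) * g s) i j := fun i => Integrable.eval (h1 i)
  refine Eq.trans ?_ (convolution_eq_swap (f := toPi f) (g := toPi g) (mulL k l m)).symm
  ext i j
  refine Eq.trans ?_ (congrFun (eval_integral h1 i) j).symm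
  exact (eval_integral (h2 i) j).symm

lemma IntM.conv {k l m : ℕ} {f : MatF k l} {g : MatF l m} (hf : IntM f)
    (hg : IntM g) : IntM (conv f g) :=
  IntM.of_pi ((hf.pi.integrable_convolution _ hg.pi).congr (conv_ae_eq hf hg).symm)

lemma cv_congr_left {k m : ℕ} {r r' : MatF k m} (F : ℝ → Fin m → ℂ) (h : toPi r =ᵐ[volume] toPi r') :
    cv r F = cv r' F := by
  ext1 t
  refine integral_congr_ae ?_
  filter_upwards [h] with s hs
  exact congrArg (fun A => mulVecL k m A (F (t - s))) hs

/-- Associativity of convolution, almost everywhere. -/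
lemma cv_cv {k l m : ℕ} {f : MatF k l} {g : MatF l m} {F : ℝ → Fin m → ℂ} (hf : IntM f)
    (hg : IntM g) (hF : Integrable F) :
    ∀ᵐ t, cv f (cv g F) t = cv (conv f g) F t := by
  have hc : cv (conv f g) F = (toPi f ⋆[mulL k l m] toPi g) ⋆[mulVecL k m] F :=
    cv_congr_left (r' := (toPi f ⋆[mulL k l m] toPi g : ℝ → Fin k → Fin m → ℂ)) F
      (conv_ae_eq hf hg)
  rw [hc]
  have hn := hg.pi.norm.integrable_convolution (ContinuousLinearMap.mul ℝ ℝ) hF.norm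
  filter_upwards [hf.pi.norm.ae_convolution_exists (ContinuousLinearMap.mul ℝ ℝ) hn] with t ht
  exact (convolution_assoc (mulL k l m) (mulVecL k m) (mulVecL k l) (mulVecL l m)
    (fun x y z => (Matrix.mulVec_mulVec z (x : Matrix (Fin k) (Fin l) ℂ) y).symm)
    hf.pi.aestronglyMeasurable hg.pi.aestronglyMeasurable hF.aestronglyMeasurable
    (hf.pi.ae_convolution_exists _ hg.pi) (hg.pi.norm.ae_convolution_exists _ hF.norm) ht).symm

/-- If two kernels agree almost everywhere off an additive semigroup `B`, then their convolutions
with a function supported in `B` agree off `B`. -/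
lemma cv_eq_off {k m : ℕ} {B : Set ℝ} (hB : ∀ x ∈ B, ∀ y ∈ B, x + y ∈ B) {r r' : MatF k m}
    (h : ∀ᵐ t, t ∉ B → r t = r' t) {F : ℝ → Fin m → ℂ} (hF : ∀ t ∉ B, F t = 0) {t : ℝ}
    (ht : t ∉ B) : cv r F t = cv r' F t := by
  rw [cv_apply, cv_apply]
  refine integral_congr_ae ?_
  filter_upwards [(quasiMeasurePreserving_sub_left volume t).ae h] with s hs
  by_cases hsB : s ∈ B
  · have : t - s ∉ B := fun hts => ht (by simpa using hB _ hts _ hsB)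
    simp only [hs this]
  · simp only [hF s hsB, Matrix.mulVec_zero]

lemma cv_zero_off {k m : ℕ} {B : Set ℝ} (hB : ∀ x ∈ B, ∀ y ∈ B, x + y ∈ B) {r : MatF k m}
    (h : ∀ t ∉ B, r t = 0) {F : ℝ → Fin m → ℂ} (hF : ∀ t ∉ B, F t = 0) {t : ℝ}
    (ht : t ∉ B) : cv r F t = 0 := by
  rw [cv_eq_off hB (r' := fun _ => 0) (.of_forall h) hF ht, cv_apply]
  simp

/-! ### The intertwining relation for a splitting of the line -/

lemma setIntegral_eq_cv {k m : ℕ} {S : Set ℝ} (hS : MeasurableSet S) (r : MatF k m)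
    (F : ℝ → Fin m → ℂ) (t : ℝ) :
    ∫ s, r (t - s) *ᵥ F s ∂(volume.restrict S) = cv r (S.indicator F) t := by
  rw [cv_apply, ← integral_indicator hS]
  congr 1
  ext1 s
  by_cases hs : s ∈ S <;> simp [hs]

/-- The common form of the eight identities. The line is split, up to a null set, into `A` and an
additive semigroup `B`. The operators `T₁`, `T₂` are Wiener–Hopf on `A`, `B` with symbols
`ρ₁ + r₁`, `ρ₂ + s₂`, and `H₁`, `H₂` are Hankel from `B` to `A` with kernels `r₂`, `s₁`. The
intertwining relation only needs the two product kernels to agree off `B`. -/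
theorem intertwine {k l l' m : ℕ} {A B : Set ℝ} (hA : MeasurableSet A) (hBm : MeasurableSet B)
    (hB : ∀ x ∈ B, ∀ y ∈ B, x + y ∈ B) (hAB : ∀ᵐ t : ℝ, t ∈ A ↔ t ∉ B)
    {r₁ : MatF k l} {r₂ : MatF l m} {s₁ : MatF k l'} {s₂ : MatF l' m}
    {ρ₁ : Matrix (Fin k) (Fin l) ℂ} {ρ₂ : Matrix (Fin l') (Fin m) ℂ}
    (hr₁ : IntM r₁) (hr₂ : IntM r₂) (hs₁ : IntM s₁) (hs₂ : IntM s₂)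
    (hr₁B : ∀ t ∉ B, r₁ t = 0) (hs₂B : ∀ t ∉ B, s₂ t = 0)
    (hK : ∀ᵐ t, t ∉ B → ρ₁ * r₂ t + conv r₁ r₂ t = s₁ t * ρ₂ + conv s₁ s₂ t)
    {T₁ : Lp (Fin l → ℂ) 1 (volume.restrict A) →L[ℂ] Lp (Fin k → ℂ) 1 (volume.restrict A)}
    (hT₁ : ∀ f, ⇑(T₁ f) =ᵐ[volume.restrict A] fun t =>
      ρ₁ *ᵥ f t + ∫ s, r₁ (t - s) *ᵥ f s ∂(volume.restrict A))
    {H₁ : Lp (Fin m → ℂ) 1 (volume.restrict B) →L[ℂ] Lp (Fin l → ℂ) 1 (volume.restrict A)}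
    (hH₁ : ∀ f, ⇑(H₁ f) =ᵐ[volume.restrict A] fun t =>
      ∫ s, r₂ (t - s) *ᵥ f s ∂(volume.restrict B))
    {H₂ : Lp (Fin l' → ℂ) 1 (volume.restrict B) →L[ℂ] Lp (Fin k → ℂ) 1 (volume.restrict A)}
    (hH₂ : ∀ f, ⇑(H₂ f) =ᵐ[volume.restrict A] fun t =>
      ∫ s, s₁ (t - s) *ᵥ f s ∂(volume.restrict B))
    {T₂ : Lp (Fin m → ℂ) 1 (volume.restrict B) →L[ℂ] Lp (Fin l' → ℂ) 1 (volume.restrict B)}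
    (hT₂ : ∀ f, ⇑(T₂ f) =ᵐ[volume.restrict B] fun t =>
      ρ₂ *ᵥ f t + ∫ s, s₂ (t - s) *ᵥ f s ∂(volume.restrict B)) :
    T₁.comp H₁ = H₂.comp T₂ := by
  refine ContinuousLinearMap.ext fun f => Lp.ext ?_
  simp only [ContinuousLinearMap.comp_apply]
  set F : ℝ → Fin m → ℂ := B.indicator f with hFdef
  have hF : Integrable F := (integrable_indicator_iff hBm).2 (L1.integrable_coeFn f)
  have hFB : ∀ t ∉ B, F t = 0 := fun t ht => Set.indicator_of_notMem ht _
  have hG : Integrable (cv r₂ F) := integrable_cv hr₂ hF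
  have e1 : ∀ᵐ t, t ∈ A → H₁ f t = cv r₂ F t := by
    have := hH₁ f
    simp only [setIntegral_eq_cv hBm] at this
    exact (ae_restrict_iff' hA).1 this
  -- The function computed by the first Hankel operator is `cv r₂ F` minus its part on `B`.
  have e2 : cv r₂ F =ᵐ[volume] A.indicator (H₁ f) + B.indicator (cv r₂ F) := by
    filter_upwards [e1, hAB] with t h1 h2
    by_cases hA' : t ∈ A
    · simp [hA', h2.1 hA', h1 hA']
    · have hB' : t ∈ B := by by_contra h; exact hA' (h2.2 h)
      simp [hA', hB']
  have hiA : Integrable (A.indicator (H₁ f)) :=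
    (integrable_indicator_iff hA).2 (L1.integrable_coeFn _)
  have hiB : Integrable (B.indicator (cv r₂ F)) := hG.indicator hBm
  have e3 : ∀ᵐ t, t ∈ A → T₁ (H₁ f) t = ρ₁ *ᵥ H₁ f t + cv r₁ (A.indicator (H₁ f)) t := by
    have := hT₁ (H₁ f)
    simp only [setIntegral_eq_cv hA] at this
    exact (ae_restrict_iff' hA).1 this
  have e4 : ∀ᵐ t, t ∈ A → H₂ (T₂ f) t = cv s₁ (B.indicator (T₂ f)) t := by
    have := hH₂ (T₂ f)
    simp only [setIntegral_eq_cv hBm] at this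
    exact (ae_restrict_iff' hA).1 this
  have e5 : ∀ᵐ t, t ∈ B → T₂ f t = ρ₂ *ᵥ f t + cv s₂ F t := by
    have := hT₂ f
    simp only [setIntegral_eq_cv hBm] at this
    exact (ae_restrict_iff' hBm).1 this
  -- Since `s₂` and `F` live on `B`, so does their convolution, and nothing is cut off.
  have e6 : B.indicator (T₂ f) =ᵐ[volume] (fun t => ρ₂ *ᵥ F t) + cv s₂ F := by
    filter_upwards [e5] with t h5
    by_cases ht : t ∈ B
    · simp [ht, h5 ht, hFdef]
    · simp [ht, hFB t ht, cv_zero_off hB hs₂B hFB ht]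
  have hρF : Integrable fun t => ρ₂ *ᵥ F t := (mulVecL l' m ρ₂).integrable_comp hF
  have hρr : IntM fun t => ρ₁ * r₂ t := .of_pi ((mulL k l m ρ₁).integrable_comp hr₂.pi)
  have hsρ : IntM fun t => s₁ t * ρ₂ := .of_pi (((mulL k l' m).flip ρ₂).integrable_comp hs₁.pi)
  have g1 := cv_add_right hr₁ hiA hiB
  rw [← cv_congr r₁ e2] at g1
  have g2 := cv_add_right hs₁ hρF (integrable_cv hs₂ hF)
  rw [← cv_congr s₁ e6, cv_mulVec] at g2
  refine (ae_restrict_iff' hA).2 ?_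
  filter_upwards [e1, e3, e4, hAB, g1, g2, cv_cv hr₁ hr₂ hF, cv_cv hs₁ hs₂ hF,
    mulVec_cv ρ₁ hr₂ hF, cv_add_left hρr (hr₁.conv hr₂) hF,
    cv_add_left hsρ (hs₁.conv hs₂) hF] with t h1 h3 h4 h5 h6 h7 h8 h9 h10 h11 h12 htA
  have htB := h5.1 htA
  rw [cv_zero_off hB hr₁B (fun t ht => Set.indicator_of_notMem ht _) htB, add_zero] at h6
  rw [h3 htA, h4 htA, h1 htA, h7, ← h6, h8, h9, h10, ← h11, ← h12]
  exact cv_eq_off hB hK hFB htB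

lemma IntM.adjF {k m : ℕ} {f : MatF k m} (h : IntM f) : IntM (adjF f) := fun i j =>
  (RCLike.conjCLE (K := ℂ)).toContinuousLinearMap.integrable_comp (h j i).comp_neg

end Convolution

/-! ### Adjoints -/

lemma adjF_adjF {k m : ℕ} (f : MatF k m) : adjF (adjF f) = f := by
  ext1 t
  simp [adjF]

lemma adjF_conv {k l m : ℕ} (f : MatF k l) (g : MatF l m) :
    adjF (conv f g) = conv (adjF g) (adjF f) := by
  ext t i j
  simp only [adjF, conv, Matrix.conjTranspose_apply, Matrix.of_apply, ← Matrix.conjTranspose_mul]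
  simp only [RCLike.star_def]
  rw [← integral_conj, ← integral_sub_right_eq_self _ t]
  refine integral_congr_ae (.of_forall fun τ => ?_)
  have : -t - (τ - t) = -τ := by ring
  simp [this]

/-- The adjoint of the third relation of `CondL1`. -/
lemma CondL1.adj {p q : ℕ} {a : MatF p p} {b : MatF p q} {c : MatF q p} {d : MatF q q}
    (h : CondL1 a b c d) :
    ∀ᵐ t, adjF b t + conv (adjF b) a t = c t + conv (adjF d) c t := by
  filter_upwards [(Measure.measurePreserving_neg (volume : Measure ℝ)).quasiMeasurePreserving.ae h.2.2] with t ht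
  have h' := congrArg Matrix.conjTranspose ht
  simp only [Matrix.conjTranspose_add] at h'
  have e1 := congrFun (adjF_conv (adjF a) b) t
  have e2 := congrFun (adjF_conv (adjF c) d) t
  rw [adjF_adjF] at e1 e2
  rw [← e1, ← e2]
  have e3 : c t = (adjF c (-t))ᴴ := by simp [adjF]
  rw [e3]
  exact h'

/-- Lemma 7.2: the eight Toeplitz–Hankel intertwining identities. -/
theorem stmt7 {p q : ℕ}
    (a : MatF p p) (b : MatF p q) (c : MatF q p) (d : MatF q q)
    (ha : L1Plus a) (hb : L1Plus b) (hc : L1Minus c) (hd : L1Minus d)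
    (hL1 : CondL1 a b c d)
    (Tpα : L1P p →L[ℂ] L1P p) (hTpα : IsTP 1 a Tpα)
    (Tpαs : L1P p →L[ℂ] L1P p) (hTpαs : IsTP 1 (adjF a) Tpαs)
    (Tpβ : L1P q →L[ℂ] L1P p) (hTpβ : IsTP 0 b Tpβ)
    (Tpβs : L1P p →L[ℂ] L1P q) (hTpβs : IsTP 0 (adjF b) Tpβs)
    (Tmδ : L1M q →L[ℂ] L1M q) (hTmδ : IsTM 1 d Tmδ)
    (Tmδs : L1M q →L[ℂ] L1M q) (hTmδs : IsTM 1 (adjF d) Tmδs)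
    (Tmγ : L1M p →L[ℂ] L1M q) (hTmγ : IsTM 0 c Tmγ)
    (Tmγs : L1M q →L[ℂ] L1M p) (hTmγs : IsTM 0 (adjF c) Tmγs)
    (Hpα : L1M p →L[ℂ] L1P p) (hHpα : IsHP a Hpα)
    (Hpβ : L1M q →L[ℂ] L1P p) (hHpβ : IsHP b Hpβ)
    (Hmγ : L1P p →L[ℂ] L1M q) (hHmγ : IsHM c Hmγ)
    (Hmδ : L1P q →L[ℂ] L1M q) (hHmδ : IsHM d Hmδ)
    (Hmαs : L1P p →L[ℂ] L1M p) (hHmαs : IsHM (adjF a) Hmαs)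
    (Hmβs : L1P p →L[ℂ] L1M q) (hHmβs : IsHM (adjF b) Hmβs)
    (Hpγs : L1M q →L[ℂ] L1P p) (hHpγs : IsHP (adjF c) Hpγs)
    (Hpδs : L1M q →L[ℂ] L1P q) (hHpδs : IsHP (adjF d) Hpδs) :
    Tpαs.comp Hpβ = Hpγs.comp Tmδ ∧
    Tpαs.comp Hpα = Hpγs.comp Tmγ ∧
    Tpβs.comp Hpβ = Hpδs.comp Tmδ ∧
    Tpβs.comp Hpα = Hpδs.comp Tmγ ∧
    Tmδs.comp Hmγ = Hmβs.comp Tpα ∧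
    Tmδs.comp Hmδ = Hmβs.comp Tpβ ∧
    Tmγs.comp Hmγ = Hmαs.comp Tpα ∧
    Tmγs.comp Hmδ = Hmαs.comp Tpβ := by
  obtain ⟨h1, h2, h3⟩ := hL1
  have h4 := CondL1.adj ⟨h1, h2, h3⟩
  have hP : ∀ x ∈ Ici (0:ℝ), ∀ y ∈ Ici (0:ℝ), x + y ∈ Ici (0:ℝ) := fun x hx y hy =>
    mem_Ici.2 (add_nonneg hx hy)
  have hM : ∀ x ∈ Iic (0:ℝ), ∀ y ∈ Iic (0:ℝ), x + y ∈ Iic (0:ℝ) := fun x hx y hy =>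
    mem_Iic.2 (add_nonpos hx hy)
  have h0 : ∀ᵐ t : ℝ, t ≠ 0 := by simp [ae_iff]
  have hPM : ∀ᵐ t : ℝ, t ∈ Ici (0:ℝ) ↔ t ∉ Iic (0:ℝ) := by
    filter_upwards [h0] with t ht
    simp only [mem_Ici, mem_Iic, not_le]
    exact ⟨fun h => lt_of_le_of_ne h ht.symm, le_of_lt⟩
  have hMP : ∀ᵐ t : ℝ, t ∈ Iic (0:ℝ) ↔ t ∉ Ici (0:ℝ) := by
    filter_upwards [hPM] with t ht
    rw [ht, not_not]
  have ia : IntM a := ha.1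
  have ib : IntM b := hb.1
  have ic : IntM c := hc.1
  have id : IntM d := hd.1
  have ias := ia.adjF
  have ibs := ib.adjF
  have ics := ic.adjF
  have ids := id.adjF
  have za : ∀ t ∉ Ici (0:ℝ), a t = 0 := fun t ht => ha.2 t (not_le.1 ht)
  have zb : ∀ t ∉ Ici (0:ℝ), b t = 0 := fun t ht => hb.2 t (not_le.1 ht)
  have zc : ∀ t ∉ Iic (0:ℝ), c t = 0 := fun t ht => hc.2 t (not_le.1 ht)
  have zd : ∀ t ∉ Iic (0:ℝ), d t = 0 := fun t ht => hd.2 t (not_le.1 ht)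
  have zas : ∀ t ∉ Iic (0:ℝ), adjF a t = 0 := fun t ht => by
    simp [adjF, ha.2 (-t) (neg_lt_zero.2 (not_le.1 ht))]
  have zbs : ∀ t ∉ Iic (0:ℝ), adjF b t = 0 := fun t ht => by
    simp [adjF, hb.2 (-t) (neg_lt_zero.2 (not_le.1 ht))]
  have zcs : ∀ t ∉ Ici (0:ℝ), adjF c t = 0 := fun t ht => by
    simp [adjF, hc.2 (-t) (neg_pos.2 (not_le.1 ht))]
  have zds : ∀ t ∉ Ici (0:ℝ), adjF d t = 0 := fun t ht => by
    simp [adjF, hd.2 (-t) (neg_pos.2 (not_le.1 ht))]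
  have mP : MeasurableSet (Ici (0:ℝ)) := measurableSet_Ici
  have mM : MeasurableSet (Iic (0:ℝ)) := measurableSet_Iic
  refine ⟨?_, ?_, ?_, ?_, ?_, ?_, ?_, ?_⟩
  · refine intertwine mP mM hM hPM ias ib ics id zas zd ?_ hTpαs hHpβ hHpγs hTmδ
    filter_upwards [h3] with t h _
    rwa [Matrix.one_mul, Matrix.mul_one]
  · refine intertwine mP mM hM hPM ias ia ics ic zas zc ?_ hTpαs hHpα hHpγs hTmγ
    filter_upwards [h1] with t h ht
    rw [zas t ht, zero_add] at h
    rw [Matrix.one_mul, Matrix.mul_zero, zero_add]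
    exact sub_eq_zero.1 h
  · refine intertwine mP mM hM hPM ibs ib ids id zbs zd ?_ hTpβs hHpβ hHpδs hTmδ
    filter_upwards [h2] with t h ht
    rw [zd t ht, add_zero] at h
    rw [Matrix.zero_mul, Matrix.mul_one, zero_add]
    exact (sub_eq_zero.1 h).symm
  · refine intertwine mP mM hM hPM ibs ia ids ic zbs zc ?_ hTpβs hHpα hHpδs hTmγ
    filter_upwards [h4] with t h ht
    rw [zbs t ht, zc t ht] at h
    rwa [Matrix.zero_mul, Matrix.mul_zero]
  · refine intertwine mM mP hP hMP ids ic ibs ia zds za ?_ hTmδs hHmγ hHmβs hTpα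
    filter_upwards [h4] with t h _
    rw [Matrix.one_mul, Matrix.mul_one]
    exact h.symm
  · refine intertwine mM mP hP hMP ids id ibs ib zds zb ?_ hTmδs hHmδ hHmβs hTpβ
    filter_upwards [h2] with t h ht
    rw [zds t ht, zero_add] at h
    rw [Matrix.one_mul, Matrix.mul_zero, zero_add]
    exact sub_eq_zero.1 h
  · refine intertwine mM mP hP hMP ics ic ias ia zcs za ?_ hTmγs hHmγ hHmαs hTpα
    filter_upwards [h1] with t h ht
    rw [za t ht, add_zero] at h
    rw [Matrix.zero_mul, Matrix.mul_one, zero_add]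
    exact (sub_eq_zero.1 h).symm
  · refine intertwine mM mP hP hMP ics id ias ib zcs zb ?_ hTmγs hHmδ hHmαs hTpβ
    filter_upwards [h3] with t h ht
    rw [zb t ht, zcs t ht] at h
    rw [Matrix.zero_mul, Matrix.mul_zero]
    exact h.symm
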